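/- For all k ≥ 2 and i ≥ 0, the number of up-down words of length 2i over the alphabet {1,…,k} avoiding the consecutive pattern 132 equals the Stirling number of the second kind S(k+i−1, k−1). -/

import Mathlib

/-!
Group a word of length `2i` into `i` pairs `(a_t, b_t)`. The up-down condition says `a_t < b_t` and
`a_{t+1} < b_t`. An occurrence of 132 has to start at some `a_t`, so avoidance says that
`a_t < a_{t+1} < b_t` never happens. Altogether these conditions mean exactly that `a_t < b_t` for
all `t` and that `(a_t)` is weakly decreasing; `upDown_ncard` turns this into a bijection with the
set `pairSeqs k i`.

The sequences of pairs over an alphabet of size `m + 2` split according to their last, hence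
smallest, `a`. If it is the least letter, its partner is any of the `m + 1` other letters, and the
preceding pairs are arbitrary. If not, the least letter is never used and lowering every letter
gives a sequence over an alphabet of size `m + 1`. This is the Stirling recurrence
(`pairSeqs_ncard_succ`).
-/

/-- `w` is an up-down word: `w₀ < w₁ > w₂ < w₃ > ⋯` (0-indexed). -/
def IsUpDown {l k : ℕ} (w : Fin l → Fin k) : Prop :=
  ∀ j : ℕ, ∀ h : j + 1 < l,
    (j % 2 = 0 → w ⟨j, by omega⟩ < w ⟨j + 1, h⟩) ∧
    (j % 2 = 1 → w ⟨j + 1, h⟩ < w ⟨j, by omega⟩)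

/-- `w` avoids the consecutive pattern 132. -/
def AvoidsC132 {l k : ℕ} (w : Fin l → Fin k) : Prop :=
  ∀ j : ℕ, ∀ h : j + 2 < l,
    ¬ (w ⟨j, by omega⟩ < w ⟨j + 2, h⟩ ∧ w ⟨j + 2, h⟩ < w ⟨j + 1, by omega⟩)

/-- The number of up-down words of length `l` over `{1,…,k}` avoiding the
consecutive pattern 132. -/
noncomputable def A (k l : ℕ) : ℕ :=
  {w : Fin l → Fin k | IsUpDown w ∧ AvoidsC132 w}.ncard

/-- Stirling numbers of the second kind. -/
def stirling : ℕ → ℕ → ℕ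
  | 0, 0 => 1
  | 0, _ + 1 => 0
  | _ + 1, 0 => 0
  | n + 1, m + 1 => (m + 1) * stirling n (m + 1) + stirling n m

/-- Sequences of `i` pairs `(a_t, b_t)` of letters with `a_t < b_t` and `a` weakly decreasing. -/
def pairSeqs (k i : ℕ) : Set (Fin i → Fin k × Fin k) :=
  {f | (∀ t, (f t).1 < (f t).2) ∧ ∀ s t, s ≤ t → (f t).1 ≤ (f s).1}

/-- Reading a word two letters at a time. -/
def toPairs {k i : ℕ} (w : Fin (2 * i) → Fin k) (t : Fin i) : Fin k × Fin k :=
  (w ⟨2 * t, by omega⟩, w ⟨2 * t + 1, by omega⟩)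

lemma toPairs_injective (k i : ℕ) : Function.Injective (@toPairs k i) := by
  intro v w h
  funext ⟨j, hj⟩
  have h1 := congrFun h ⟨j / 2, by omega⟩
  simp only [toPairs, Prod.mk.injEq] at h1
  obtain ⟨ha, hb⟩ := h1
  rcases Nat.mod_two_eq_zero_or_one j with h0 | h0
  · convert ha using 3 <;> omega
  · convert hb using 3 <;> omega

lemma toPairs_surjective (k i : ℕ) : Function.Surjective (@toPairs k i) := by
  intro f
  refine ⟨fun j => if j.1 % 2 = 0 then (f ⟨j.1 / 2, by omega⟩).1 else (f ⟨j.1 / 2, by omega⟩).2, ?_⟩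
  funext t
  have h1 : (2 * t.1 + 1) / 2 = t.1 := by omega
  have h2 : (2 * t.1 + 1) % 2 = 1 := by omega
  simp [toPairs, h1, h2]

lemma toPairs_mem_iff {k i : ℕ} (w : Fin (2 * i) → Fin k) :
    toPairs w ∈ pairSeqs k i ↔ IsUpDown w ∧ AvoidsC132 w := by
  constructor
  · rintro ⟨hlt, hanti⟩
    refine ⟨fun j h => ⟨fun h0 => ?_, fun h1 => ?_⟩, fun j h => ?_⟩
    · obtain ⟨n, rfl⟩ : ∃ n, j = 2 * n := ⟨j / 2, by omega⟩
      exact hlt ⟨n, by omega⟩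
    · obtain ⟨n, rfl⟩ : ∃ n, j = 2 * n + 1 := ⟨j / 2, by omega⟩
      exact (hanti ⟨n, by omega⟩ ⟨n + 1, by omega⟩ (by simp)).trans_lt (hlt ⟨n, by omega⟩)
    · rintro ⟨hac, hcb⟩
      rcases Nat.mod_two_eq_zero_or_one j with h0 | h0
      · obtain ⟨n, rfl⟩ : ∃ n, j = 2 * n := ⟨j / 2, by omega⟩
        exact hac.not_ge (hanti ⟨n, by omega⟩ ⟨n + 1, by omega⟩ (by simp))
      · obtain ⟨n, rfl⟩ : ∃ n, j = 2 * n + 1 := ⟨j / 2, by omega⟩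
        exact hcb.not_gt (hlt ⟨n + 1, by omega⟩)
  · rintro ⟨hud, hav⟩
    refine ⟨fun t => (hud (2 * t) (by omega)).1 (by omega), ?_⟩
    rintro ⟨s, hs⟩ ⟨t, ht⟩ hst
    replace hst : s ≤ t := hst
    induction t, hst using Nat.le_induction with
    | base => exact le_rfl
    | succ n hn ih =>
      refine le_trans ?_ (ih (by omega))
      have hba := (hud (2 * n + 1) (by omega)).2 (by omega)
      have := hav (2 * n) (by omega)
      exact not_lt.mp fun hlt => this ⟨hlt, hba⟩

lemma upDown_ncard (k i : ℕ) : A k (2 * i) = (pairSeqs k i).ncard := by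
  unfold A
  rw [← Set.ncard_image_of_injective _ (toPairs_injective k i)]
  congr 1
  simp only [← toPairs_mem_iff]
  exact Set.image_preimage_eq _ (toPairs_surjective k i)

/-- Append a pair whose first letter is the least one. -/
def appendLeast {m i : ℕ} (p : (Fin i → Fin (m + 2) × Fin (m + 2)) × Fin (m + 1)) :
    Fin (i + 1) → Fin (m + 2) × Fin (m + 2) :=
  Fin.snoc (α := fun _ => Fin (m + 2) × Fin (m + 2)) p.1 (0, p.2.succ)

lemma appendLeast_injective (m i : ℕ) : Function.Injective (@appendLeast m i) := by
  rintro ⟨f, c⟩ ⟨g, d⟩ h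
  have h1 : f = g := by
    funext t
    simpa [appendLeast] using congrFun h t.castSucc
  have h2 : c = d := by
    simpa [appendLeast] using congrFun h (Fin.last i)
  rw [h1, h2]

/-- Raise every letter by one. -/
def raise {k i : ℕ} (f : Fin i → Fin k × Fin k) (t : Fin i) : Fin (k + 1) × Fin (k + 1) :=
  ((f t).1.succ, (f t).2.succ)

lemma raise_injective (k i : ℕ) : Function.Injective (@raise k i) := by
  intro f g h
  funext t
  have := congrFun h t
  simp only [raise, Prod.mk.injEq, Fin.succ_inj] at this
  exact Prod.ext this.1 this.2

lemma appendLeast_image (m i : ℕ) :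
    appendLeast '' (pairSeqs (m + 2) i ×ˢ Set.univ) =
      {f ∈ pairSeqs (m + 2) (i + 1) | (f (Fin.last i)).1 = 0} := by
  ext f
  constructor
  · rintro ⟨⟨g, c⟩, ⟨⟨hlt, hanti⟩, -⟩, rfl⟩
    refine ⟨⟨fun t => ?_, fun s t => ?_⟩, by simp [appendLeast]⟩
    · induction t using Fin.lastCases with
      | last => simp [appendLeast]
      | cast t => simpa [appendLeast] using hlt t
    · induction t using Fin.lastCases with
      | last => simp [appendLeast]
      | cast t =>
        induction s using Fin.lastCases with
        | last => exact fun h => absurd h (not_le.mpr (Fin.castSucc_lt_last t))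
        | cast s => simpa [appendLeast] using hanti s t
  · rintro ⟨⟨hlt, hanti⟩, h0⟩
    have hne : (f (Fin.last i)).2 ≠ 0 := by
      have := hlt (Fin.last i)
      rw [h0] at this
      exact this.ne'
    refine ⟨(fun t => f t.castSucc, (f (Fin.last i)).2.pred hne),
      ⟨⟨fun t => hlt _, fun s t h => hanti _ _ (by simpa using h)⟩, trivial⟩, ?_⟩
    funext t
    induction t using Fin.lastCases with
    | last => simp [appendLeast, ← h0]
    | cast t => simp [appendLeast]

lemma raise_image (m i : ℕ) :
    raise '' pairSeqs (m + 1) (i + 1) =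
      {f ∈ pairSeqs (m + 2) (i + 1) | (f (Fin.last i)).1 ≠ 0} := by
  ext f
  constructor
  · rintro ⟨g, ⟨hlt, hanti⟩, rfl⟩
    exact ⟨⟨fun t => by simpa [raise] using hlt t,
      fun s t h => by simpa [raise] using hanti s t h⟩, by simp [raise]⟩
  · rintro ⟨⟨hlt, hanti⟩, h0⟩
    have ha : ∀ t, (f t).1 ≠ 0 := fun t =>
      ((Fin.pos_of_ne_zero h0).trans_le (hanti t (Fin.last i) (Fin.le_last t))).ne'
    have hb : ∀ t, (f t).2 ≠ 0 := fun t => ((Fin.pos_of_ne_zero (ha t)).trans (hlt t)).ne'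
    refine ⟨fun t => ((f t).1.pred (ha t), (f t).2.pred (hb t)), ⟨fun t => ?_, fun s t h => ?_⟩, ?_⟩
    · simpa using hlt t
    · simpa using hanti s t h
    · funext t
      simp [raise]

lemma pairSeqs_ncard_succ (m i : ℕ) :
    (pairSeqs (m + 2) (i + 1)).ncard =
      (m + 1) * (pairSeqs (m + 2) i).ncard + (pairSeqs (m + 1) (i + 1)).ncard := by
  have hsplit : pairSeqs (m + 2) (i + 1) =
      appendLeast '' (pairSeqs (m + 2) i ×ˢ Set.univ) ∪ raise '' pairSeqs (m + 1) (i + 1) := by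
    rw [appendLeast_image, raise_image]
    ext f
    simp only [Set.mem_union, Set.mem_ofPred_eq]
    tauto
  have hdisj : Disjoint (appendLeast '' (pairSeqs (m + 2) i ×ˢ Set.univ))
      (raise '' pairSeqs (m + 1) (i + 1)) := by
    rw [appendLeast_image, raise_image, Set.disjoint_left]
    rintro f ⟨-, h⟩ ⟨-, h'⟩
    exact h' h
  rw [hsplit, Set.ncard_union_eq hdisj (Set.toFinite _) (Set.toFinite _),
    Set.ncard_image_of_injective _ (appendLeast_injective m i),
    Set.ncard_image_of_injective _ (raise_injective (m + 1) (i + 1)),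
    Set.ncard_prod, Set.ncard_univ, Nat.card_fin, mul_comm]

lemma pairSeqs_ncard_zero (k : ℕ) : (pairSeqs k 0).ncard = 1 := by
  rw [Set.ncard_eq_one]
  refine ⟨Fin.elim0, Set.eq_singleton_iff_unique_mem.mpr
    ⟨⟨fun t => t.elim0, fun t => t.elim0⟩, fun f _ => Subsingleton.elim _ _⟩⟩

lemma stirling_eq_zero_of_lt {n m : ℕ} (h : n < m) : stirling n m = 0 := by
  induction n generalizing m with
  | zero => obtain ⟨m, rfl⟩ := Nat.exists_eq_succ_of_ne_zero h.ne'; simp [stirling]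
  | succ n ih =>
    obtain ⟨m, rfl⟩ := Nat.exists_eq_succ_of_ne_zero (Nat.ne_zero_of_lt h)
    simp [stirling, ih (show n < m + 1 by omega), ih (show n < m by omega)]

lemma stirling_self (n : ℕ) : stirling n n = 1 := by
  induction n with
  | zero => simp [stirling]
  | succ n ih => simp [stirling, ih, stirling_eq_zero_of_lt]

lemma pairSeqs_ncard (m i : ℕ) : (pairSeqs (m + 1) i).ncard = stirling (m + i) m := by
  induction m generalizing i with
  | zero =>
    cases i with
    | zero => simp [pairSeqs_ncard_zero, stirling]
    | succ i =>
      have : pairSeqs (0 + 1) (i + 1) = ∅ := by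
        refine Set.eq_empty_of_forall_notMem fun f hf => ?_
        exact (hf.1 0).ne (Fin.ext (by omega))
      rw [this, Set.ncard_empty, Nat.zero_add, stirling]
  | succ m ihm =>
    induction i with
    | zero => rw [pairSeqs_ncard_zero, Nat.add_zero, stirling_self]
    | succ i ihi =>
      rw [pairSeqs_ncard_succ, ihi, ihm, ← Nat.add_assoc (m + 1) i 1, stirling]
      rw [show m + (i + 1) = m + 1 + i by omega]

/-- The number of `⟨132⟩`-avoiding up-down words of length `2i` over `{1,…,k}`
equals the Stirling number `S(k+i−1, k−1)`. -/
theorem stmt_3 (k i : ℕ) (hk : 2 ≤ k) :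
    A k (2 * i) = stirling (k + i - 1) (k - 1) := by
  obtain ⟨m, rfl⟩ : ∃ m, k = m + 1 := ⟨k - 1, by omega⟩
  rw [upDown_ncard, pairSeqs_ncard]
  congr 1
  omega
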